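/- arXiv:1412.5507 — 5 statements merged into one kernel-verified Lean document; each statement's English description precedes it below -/
import Mathlib

section
/- Let p and q be linearly independent points of the de Sitter plane S₁² such that W = span{p,q} is a timelike plane. Then the intersection W ∩ S₁² has exactly two connected components (the two branches of a hyperbola), and p and q lie in the same connected component of W ∩ S₁² if and only if B(p,q) > 1; equivalently, p and q lie in different connected components if and only if B(p,q) < −1. -/
/-!
Put `c = B p q`. Since `B p p = B q q = 1`, a vector `x = a p + b q` of `W` satisfies
`B x x = a² + 2abc + b² = (a + bc)² - b² (c² - 1)` and `B p x = a + bc`. A timelike vector in `W`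
forces `c² > 1`, so on `W ∩ S₁²` the functional `B p ·` satisfies `(B p x)² = 1 + b² (c² - 1) ≥ 1`
and never vanishes. Its sign therefore separates `W ∩ S₁²`, and the part of sign `s = ±1` is
connected because `b` parametrizes it: `a = s √(1 + b² (c² - 1)) - bc`. Hence two points lie in
the same component exactly when `B p ·` has the same sign at both of them
(`connectedComponentIn_eq_iff_sign`). There are two signs, attained at `p` and `-p`; and
`B p p = 1`, `B p q = c` with `|c| > 1`.
-/

noncomputable section

/-- The Lorentzian bilinear form on Minkowski 3-space. -/
def B (u v : Fin 3 → ℝ) : ℝ := u 0 * v 0 + u 1 * v 1 - u 2 * v 2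

/-- The de Sitter plane. -/
def deSitter : Set (Fin 3 → ℝ) := {x | B x x = 1}

lemma B_comb_self (p q : Fin 3 → ℝ) (a b : ℝ) :
    B (a • p + b • q) (a • p + b • q) = a ^ 2 * B p p + 2 * a * b * B p q + b ^ 2 * B q q := by
  simp only [B, Pi.add_apply, Pi.smul_apply, smul_eq_mul]; ring

lemma B_comb_right (p q : Fin 3 → ℝ) (a b : ℝ) :
    B p (a • p + b • q) = a * B p p + b * B p q := by
  simp only [B, Pi.add_apply, Pi.smul_apply, smul_eq_mul]; ring

lemma B_neg_right (p x : Fin 3 → ℝ) : B p (-x) = -B p x := by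
  simp only [B, Pi.neg_apply]; ring

lemma B_neg_neg (x : Fin 3 → ℝ) : B (-x) (-x) = B x x := by
  simp only [B, Pi.neg_apply]; ring

lemma continuous_B_right (p : Fin 3 → ℝ) : Continuous (B p) := by
  unfold B; fun_prop

/-- The section of the de Sitter plane by the plane spanned by `p` and `q`. -/
def hyperbola (p q : Fin 3 → ℝ) : Set (Fin 3 → ℝ) :=
  (Submodule.span ℝ {p, q} : Set (Fin 3 → ℝ)) ∩ deSitter

/-- The two branches of the hyperbola are `s = 1` and `s = -1`. -/
def branch (p q : Fin 3 → ℝ) (s : ℝ) : Set (Fin 3 → ℝ) :=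
  {x ∈ hyperbola p q | 0 < s * B p x}

lemma one_lt_sq_of_timelike {p q : Fin 3 → ℝ} (hp : B p p = 1) (hq : B q q = 1)
    (htime : ∃ x ∈ Submodule.span ℝ {p, q}, B x x < 0) : 1 < B p q ^ 2 := by
  obtain ⟨x, hx, hneg⟩ := htime
  obtain ⟨a, b, rfl⟩ := Submodule.mem_span_pair.1 hx
  rw [B_comb_self, hp, hq] at hneg
  by_contra! h
  nlinarith [sq_nonneg (a + b * B p q), mul_nonneg (sq_nonneg b) (sub_nonneg.2 h)]

lemma B_ne_zero_of_mem {p q x : Fin 3 → ℝ} (hp : B p p = 1) (hq : B q q = 1)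
    (hc : 1 < B p q ^ 2) (hx : x ∈ hyperbola p q) : B p x ≠ 0 := by
  obtain ⟨hxW, hxS⟩ := hx
  obtain ⟨a, b, rfl⟩ := Submodule.mem_span_pair.1 hxW
  have hxS : B (a • p + b • q) (a • p + b • q) = 1 := hxS
  rw [B_comb_self, hp, hq] at hxS
  rw [B_comb_right, hp]
  intro h0
  have ha : a = -(b * B p q) := by linarith
  subst ha
  nlinarith [mul_nonneg (sq_nonneg b) (sub_pos.2 hc).le]

/-- Each branch is connected, being parametrized by the coefficient of `q`. -/
lemma isPreconnected_branch {p q : Fin 3 → ℝ} (hp : B p p = 1) (hq : B q q = 1)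
    (hc : 1 < B p q ^ 2) {s : ℝ} (hs : s ^ 2 = 1) : IsPreconnected (branch p q s) := by
  have hpos : ∀ t : ℝ, 0 < 1 + t ^ 2 * (B p q ^ 2 - 1) := fun t => by
    have := mul_nonneg (sq_nonneg t) (sub_pos.2 hc).le
    linarith
  have key : branch p q s = Set.range fun t : ℝ =>
      (s * √(1 + t ^ 2 * (B p q ^ 2 - 1)) - t * B p q) • p + t • q := by
    ext x
    constructor
    · rintro ⟨⟨hxW, hxS⟩, hsx⟩
      obtain ⟨a, b, rfl⟩ := Submodule.mem_span_pair.1 hxW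
      have hxS : B (a • p + b • q) (a • p + b • q) = 1 := hxS
      rw [B_comb_self, hp, hq] at hxS
      rw [B_comb_right, hp] at hsx
      refine ⟨b, ?_⟩
      have h : √(1 + b ^ 2 * (B p q ^ 2 - 1)) = s * (a * 1 + b * B p q) := by
        rw [Real.sqrt_eq_iff_mul_self_eq (hpos b).le hsx.le]
        linear_combination -(a + b * B p q) ^ 2 * hs - hxS
      have ha : s * √(1 + b ^ 2 * (B p q ^ 2 - 1)) - b * B p q = a := by
        rw [h]; linear_combination (a + b * B p q) * hs
      simp only [ha]
    · rintro ⟨t, rfl⟩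
      have hr := Real.sq_sqrt (hpos t).le
      have hr0 := Real.sqrt_pos.2 (hpos t)
      refine ⟨⟨Submodule.mem_span_pair.2 ⟨_, _, rfl⟩, ?_⟩, ?_⟩
      · change B _ _ = 1
        rw [B_comb_self, hp, hq]
        linear_combination √(1 + t ^ 2 * (B p q ^ 2 - 1)) ^ 2 * hs + hr
      · rw [B_comb_right, hp]
        have : s * ((s * √(1 + t ^ 2 * (B p q ^ 2 - 1)) - t * B p q) * 1 + t * B p q)
            = √(1 + t ^ 2 * (B p q ^ 2 - 1)) := by
          linear_combination √(1 + t ^ 2 * (B p q ^ 2 - 1)) * hs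
        rw [this]; exact hr0
  rw [key]
  exact isPreconnected_range (by fun_prop)

lemma connectedComponentIn_eq_branch {p q x : Fin 3 → ℝ} (hp : B p p = 1) (hq : B q q = 1)
    (hc : 1 < B p q ^ 2) {s : ℝ} (hs : s ^ 2 = 1) (hx : x ∈ branch p q s) :
    connectedComponentIn (hyperbola p q) x = branch p q s := by
  apply Set.Subset.antisymm
  · intro y hy
    have hyS := connectedComponentIn_subset _ _ hy
    refine ⟨hyS, ?_⟩
    by_contra! hle
    -- Otherwise `s * B p ·` would vanish somewhere on the component of `x`.
    obtain ⟨z, hz, hz0⟩ := isPreconnected_connectedComponentIn.intermediate_value hy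
      (mem_connectedComponentIn hx.1) (f := fun z => s * B p z)
      (continuous_const.mul (continuous_B_right p)).continuousOn ⟨hle, hx.2.le⟩
    rcases mul_eq_zero.1 hz0 with h | h
    · rw [h] at hs; norm_num at hs
    · exact B_ne_zero_of_mem hp hq hc (connectedComponentIn_subset _ _ hz) h
  · exact (isPreconnected_branch hp hq hc hs).subset_connectedComponentIn hx fun y hy => hy.1

lemma connectedComponentIn_eq_iff_sign {p q x y : Fin 3 → ℝ} (hp : B p p = 1) (hq : B q q = 1)
    (hc : 1 < B p q ^ 2) (hx : x ∈ hyperbola p q) (hy : y ∈ hyperbola p q) :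
    connectedComponentIn (hyperbola p q) x = connectedComponentIn (hyperbola p q) y ↔
      0 < B p x * B p y := by
  obtain ⟨s, hs, hsx⟩ : ∃ s : ℝ, s ^ 2 = 1 ∧ 0 < s * B p x := by
    rcases (B_ne_zero_of_mem hp hq hc hx).lt_or_gt with h | h
    · exact ⟨-1, by norm_num, by linarith⟩
    · exact ⟨1, by norm_num, by linarith⟩
  have hiff : 0 < B p x * B p y ↔ 0 < s * B p y := by
    have : B p x * B p y = (s * B p x) * (s * B p y) := by
      linear_combination -(B p x * B p y) * hs
    rw [this, mul_pos_iff_of_pos_left hsx]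
  rw [hiff]
  have hcx := connectedComponentIn_eq_branch hp hq hc hs ⟨hx, hsx⟩
  constructor
  · intro h
    have := mem_connectedComponentIn hy
    rw [← h, hcx] at this
    exact this.2
  · intro h
    rw [hcx, connectedComponentIn_eq_branch hp hq hc hs ⟨hy, h⟩]

lemma connectedComponents_mk_eq_iff {X : Type*} [TopologicalSpace X] {S : Set X} (x y : S) :
    (x : ConnectedComponents S) = y ↔
      connectedComponentIn S (x : X) = connectedComponentIn S (y : X) := by
  rw [ConnectedComponents.coe_eq_coe, connectedComponentIn_eq_image x.2,
    connectedComponentIn_eq_image y.2, Subtype.val_injective.image_injective.eq_iff]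

theorem stmt3 (p q : Fin 3 → ℝ) (hp : p ∈ deSitter) (hq : q ∈ deSitter)
    (hind : LinearIndependent ℝ ![p, q])
    (W : Submodule ℝ (Fin 3 → ℝ)) (hW : W = Submodule.span ℝ {p, q})
    (htime : ∃ x ∈ W, B x x < 0) :
    Nat.card (ConnectedComponents ↥((W : Set (Fin 3 → ℝ)) ∩ deSitter)) = 2 ∧
    (connectedComponentIn ((W : Set (Fin 3 → ℝ)) ∩ deSitter) p =
        connectedComponentIn ((W : Set (Fin 3 → ℝ)) ∩ deSitter) q ↔ 1 < B p q) ∧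
    (connectedComponentIn ((W : Set (Fin 3 → ℝ)) ∩ deSitter) p ≠
        connectedComponentIn ((W : Set (Fin 3 → ℝ)) ∩ deSitter) q ↔ B p q < -1) := by
  subst hW
  have hp1 : B p p = 1 := hp
  have hq1 : B q q = 1 := hq
  have hc := one_lt_sq_of_timelike hp1 hq1 htime
  have hpS : p ∈ hyperbola p q := ⟨Submodule.subset_span (by simp), hp⟩
  have hqS : q ∈ hyperbola p q := ⟨Submodule.subset_span (by simp), hq⟩
  have hnS : -p ∈ hyperbola p q := ⟨neg_mem hpS.1, (B_neg_neg p).trans hp1⟩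
  have hpq := connectedComponentIn_eq_iff_sign hp1 hq1 hc hpS hqS
  rw [hp1, one_mul] at hpq
  change Nat.card (ConnectedComponents (hyperbola p q)) = 2 ∧
    (connectedComponentIn (hyperbola p q) p = connectedComponentIn (hyperbola p q) q ↔ _) ∧
    (connectedComponentIn (hyperbola p q) p ≠ connectedComponentIn (hyperbola p q) q ↔ _)
  refine ⟨?_, ?_, ?_⟩
  · rw [Nat.card_eq_two_iff]
    refine ⟨((⟨p, hpS⟩ : hyperbola p q) : ConnectedComponents (hyperbola p q)),
      ((⟨-p, hnS⟩ : hyperbola p q) : ConnectedComponents (hyperbola p q)), ?_, ?_⟩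
    · rw [Ne, connectedComponents_mk_eq_iff,
        connectedComponentIn_eq_iff_sign hp1 hq1 hc hpS hnS, B_neg_right, hp1]
      norm_num
    · refine Set.eq_univ_of_forall fun z => ?_
      obtain ⟨x, rfl⟩ := ConnectedComponents.surjective_coe z
      rw [Set.mem_insert_iff, Set.mem_singleton_iff, connectedComponents_mk_eq_iff,
        connectedComponents_mk_eq_iff, connectedComponentIn_eq_iff_sign hp1 hq1 hc x.2 hpS,
        connectedComponentIn_eq_iff_sign hp1 hq1 hc x.2 hnS, B_neg_right, hp1]
      rcases (B_ne_zero_of_mem hp1 hq1 hc x.2).lt_or_gt with h | h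
      · right; linarith
      · left; linarith
  · rw [hpq]
    constructor <;> intro h <;> nlinarith
  · rw [Ne, hpq, not_lt]
    constructor <;> intro h <;> nlinarith
end
end

section
/- Let p and q be linearly independent points of the de Sitter plane S₁² and let W = span{p,q}. Then p and q lie in the same connected component of W ∩ S₁² (i.e., there is a geodesic segment of S₁² joining p to q inside W) if and only if B(p,q) > −1. -/
/-!
Put `c = B p q`, so that `B (a p + b q) (a p + b q) = a² + b² + 2abc`.

If `c > -1`, this form is positive on the affine segment from `p` to `q`: for `a + b = 1`,
`a, b ≥ 0`, it equals `1 + 2ab(c - 1)` with `0 ≤ ab ≤ 1/4`. Normalizing the segment therefore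
gives a path from `p` to `q` in `W ∩ deSitter`.

If `c ≤ -1`, the linear functional `x ↦ B x p - B x q`, whose value at `a p + b q` is
`(a - b)(1 - c)`, takes the values `1 - c > 0` at `p` and `c - 1 < 0` at `q`. It vanishes only where
`a = b`, and there the form is `2a²(1 + c) ≤ 0`, so it has no zero on `W ∩ deSitter` and separates
`p` from `q`.
-/

noncomputable section

theorem B_combo (p q : Fin 3 → ℝ) (a b : ℝ) :
    B (a • p + b • q) (a • p + b • q) = a ^ 2 * B p p + b ^ 2 * B q q + 2 * a * b * B p q := by
  simp only [B, Pi.add_apply, Pi.smul_apply, smul_eq_mul]; ring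

theorem B_smul_smul (a : ℝ) (x : Fin 3 → ℝ) : B (a • x) (a • x) = a ^ 2 * B x x := by
  simp only [B, Pi.smul_apply, smul_eq_mul]; ring

theorem B_combo_sub (p q : Fin 3 → ℝ) (a b : ℝ) (hp : B p p = 1) (hq : B q q = 1) :
    B (a • p + b • q) p - B (a • p + b • q) q = (a - b) * (1 - B p q) := by
  have h : B (a • p + b • q) p - B (a • p + b • q) q
      = a * B p p + b * B p q - a * B p q - b * B q q := by
    simp only [B, Pi.add_apply, Pi.smul_apply, smul_eq_mul]; ring
  rw [h, hp, hq]; ring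

theorem B_segment_pos (p q : Fin 3 → ℝ) (hp : B p p = 1) (hq : B q q = 1) (h : -1 < B p q)
    (t : ℝ) (ht : t ∈ Set.Icc (0 : ℝ) 1) :
    0 < B ((1 - t) • p + t • q) ((1 - t) • p + t • q) := by
  rw [B_combo, hp, hq]
  have h1 : 0 ≤ t * (1 - t) := mul_nonneg ht.1 (by linarith [ht.2])
  nlinarith [sq_nonneg (2 * t - 1), mul_nonneg h1 (by linarith : 0 ≤ B p q + 1)]

theorem stmt4 (p q : Fin 3 → ℝ) (hp : p ∈ deSitter) (hq : q ∈ deSitter)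
    (hind : LinearIndependent ℝ ![p, q])
    (W : Submodule ℝ (Fin 3 → ℝ)) (hW : W = Submodule.span ℝ {p, q}) :
    connectedComponentIn ((W : Set (Fin 3 → ℝ)) ∩ deSitter) p =
      connectedComponentIn ((W : Set (Fin 3 → ℝ)) ∩ deSitter) q ↔ -1 < B p q := by
  have hp1 : B p p = 1 := hp
  have hq1 : B q q = 1 := hq
  have hpW : p ∈ W := by rw [hW]; exact Submodule.subset_span (by simp)
  have hqW : q ∈ W := by rw [hW]; exact Submodule.subset_span (by simp)
  constructor
  · intro h
    by_contra! hc
    have hqmem : q ∈ connectedComponentIn ((W : Set (Fin 3 → ℝ)) ∩ deSitter) p := by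
      rw [h]; exact mem_connectedComponentIn ⟨hqW, hq⟩
    have hpmem := mem_connectedComponentIn (x := p)
      (F := (W : Set (Fin 3 → ℝ)) ∩ deSitter) ⟨hpW, hp⟩
    have hf : Continuous (fun x : Fin 3 → ℝ => B x p - B x q) := by
      unfold B; fun_prop
    have hsymm : B q p = B p q := by unfold B; ring
    obtain ⟨x, hx, hx0⟩ := isPreconnected_connectedComponentIn.intermediate_value hqmem hpmem
      hf.continuousOn (show (0 : ℝ) ∈ Set.Icc _ _ by
        constructor <;> simp only [hsymm, hp1, hq1] <;> linarith)
    obtain ⟨hxW, hxS⟩ := connectedComponentIn_subset _ _ hx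
    rw [hW] at hxW
    obtain ⟨a, b, rfl⟩ := Submodule.mem_span_pair.1 hxW
    have hx1 : B (a • p + b • q) (a • p + b • q) = 1 := hxS
    rw [B_combo, hp1, hq1] at hx1
    simp only [B_combo_sub p q a b hp1 hq1] at hx0
    obtain h0 | h0 := mul_eq_zero.1 hx0
    · obtain rfl : a = b := by linarith
      nlinarith [mul_nonneg (sq_nonneg a) (by linarith : 0 ≤ -1 - B p q)]
    · linarith
  · intro h
    let s : ℝ → Fin 3 → ℝ := fun t => (1 - t) • p + t • q
    let g : ℝ → Fin 3 → ℝ := fun t => (√(B (s t) (s t)))⁻¹ • s t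
    have hpos : ∀ t ∈ Set.Icc (0 : ℝ) 1, 0 < B (s t) (s t) := B_segment_pos p q hp1 hq1 h
    have hs : Continuous s := by fun_prop
    have hBs : Continuous fun t => B (s t) (s t) := by
      unfold B; fun_prop
    have hg : ContinuousOn g (Set.Icc 0 1) :=
      (hBs.sqrt.continuousOn.inv₀ fun t ht => (Real.sqrt_pos.2 (hpos t ht)).ne').smul
        hs.continuousOn
    have hg0 : g 0 = p := by simp [g, s, hp1]
    have hg1 : g 1 = q := by simp [g, s, hq1]
    have hsub : g '' Set.Icc 0 1 ⊆ (W : Set (Fin 3 → ℝ)) ∩ deSitter := by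
      rintro _ ⟨t, ht, rfl⟩
      refine ⟨W.smul_mem _ (W.add_mem (W.smul_mem _ hpW) (W.smul_mem _ hqW)), ?_⟩
      change B ((√(B (s t) (s t)))⁻¹ • s t) ((√(B (s t) (s t)))⁻¹ • s t) = 1
      rw [B_smul_smul, inv_pow, Real.sq_sqrt (hpos t ht).le, inv_mul_cancel₀ (hpos t ht).ne']
    exact connectedComponentIn_eq <|
      (isPreconnected_Icc.image g hg).subset_connectedComponentIn
        ⟨0, by simp, hg0⟩ hsub ⟨1, by simp, hg1⟩
end
end

section
/- Let p and q be linearly independent points of the de Sitter plane S₁² and let W = span{p,q}. Then the intersection W ∩ S₁² is compact and connected (an ellipse) if and only if |B(p,q)| < 1. -/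
/-!
In the coordinates `a • p + b • q` of `W`, the section `W ∩ S₁²` is the conic
`a² + 2 c a b + b² = 1` with `c = B p q`, equivalently `(a + c b)² + (1 - c²) b² = 1`.

If `|c| < 1`, this is an ellipse: it is the image of `[-π, π]` under the continuous map
`θ ↦ (cos θ - c sin θ / r) • p + (sin θ / r) • q` with `r = √(1 - c²)`, hence compact and connected.

If `|c| ≥ 1`, then for every real `b` the equation has the solution `a = √(1 + (c² - 1) b²) - c b`.
So a linear functional that vanishes at `p` but not at `q` takes all real values on the section,
which is therefore not compact.
-/

noncomputable section

lemma B_comb (p q : Fin 3 → ℝ) (hp : p ∈ deSitter) (hq : q ∈ deSitter) (a b : ℝ) :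
    B (a • p + b • q) (a • p + b • q) = (a + B p q * b) ^ 2 + (1 - B p q ^ 2) * b ^ 2 := by
  have hp' : B p p = 1 := hp
  have hq' : B q q = 1 := hq
  have h : B (a • p + b • q) (a • p + b • q)
      = a ^ 2 * B p p + 2 * a * b * B p q + b ^ 2 * B q q := by
    simp only [B, Pi.add_apply, Pi.smul_apply, smul_eq_mul]
    ring
  rw [h, hp', hq']
  ring

/-- For `|B p q| < 1` the section of the de Sitter plane is a parametrized ellipse. -/
lemma section_eq_image (p q : Fin 3 → ℝ) (hp : p ∈ deSitter) (hq : q ∈ deSitter)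
    (r : ℝ) (hr : 0 < r) (hr2 : r ^ 2 = 1 - B p q ^ 2) :
    (Submodule.span ℝ {p, q} : Set (Fin 3 → ℝ)) ∩ deSitter =
      (fun θ : ℝ => (Real.cos θ - B p q * (Real.sin θ / r)) • p + (Real.sin θ / r) • q) ''
        Set.Icc (-Real.pi) Real.pi := by
  ext x
  constructor
  · rintro ⟨hx, hx1⟩
    obtain ⟨a, b, rfl⟩ := Submodule.mem_span_pair.1 hx
    have h1 : (a + B p q * b) ^ 2 + (r * b) ^ 2 = 1 := by
      have h2 := B_comb p q hp hq a b
      have h3 : B (a • p + b • q) (a • p + b • q) = 1 := hx1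
      rw [h3, ← hr2] at h2
      linarith
    -- The angle is the argument of the unit complex number `(a + c b) + (r b) i`.
    obtain ⟨z, hz⟩ : ∃ z : ℂ, z = ⟨a + B p q * b, r * b⟩ := ⟨_, rfl⟩
    have hn : ‖z‖ = 1 := by
      have h2 : ‖z‖ ^ 2 = 1 := by
        rw [Complex.sq_norm, Complex.normSq_apply, hz]
        simp only
        linarith
      nlinarith [norm_nonneg z]
    have hz0 : z ≠ 0 := by
      intro h
      simp [h] at hn
    refine ⟨z.arg, ⟨(Complex.neg_pi_lt_arg z).le, Complex.arg_le_pi z⟩, ?_⟩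
    have hc : Real.cos z.arg = a + B p q * b := by
      rw [Complex.cos_arg hz0, hn, hz]
      simp
    have hs : Real.sin z.arg / r = b := by
      rw [Complex.sin_arg, hn, hz]
      simp only
      field_simp
    simp only [hc, hs, add_sub_cancel_right]
  · rintro ⟨θ, -, rfl⟩
    refine ⟨Submodule.mem_span_pair.2 ⟨_, _, rfl⟩, ?_⟩
    change B _ _ = 1
    rw [B_comb p q hp hq, ← hr2, sub_add_cancel, ← mul_pow, mul_div_cancel₀ _ hr.ne']
    exact Real.cos_sq_add_sin_sq θ

lemma not_isCompact_section (p q : Fin 3 → ℝ) (hp : p ∈ deSitter) (hq : q ∈ deSitter)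
    (hind : LinearIndependent ℝ ![p, q]) (hc : 1 ≤ |B p q|) :
    ¬ IsCompact ((Submodule.span ℝ {p, q} : Set (Fin 3 → ℝ)) ∩ deSitter) := by
  intro hK
  have hqp : q ∉ Submodule.span ℝ {p} := by
    intro h
    obtain ⟨a, ha⟩ := Submodule.mem_span_singleton.1 h
    have h2 := (LinearIndependent.pair_iff.1 hind a (-1) (by rw [ha]; simp)).2
    norm_num at h2
  obtain ⟨φ, hφq, hφp⟩ := Submodule.exists_le_ker_of_notMem hqp
  have hφp0 : φ p = 0 := hφp (Submodule.mem_span_singleton_self p)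
  have hφ : Continuous φ := φ.continuous_of_finiteDimensional
  have hc2 : 1 ≤ B p q ^ 2 := by
    rw [← sq_abs]
    nlinarith
  have himg : φ '' ((Submodule.span ℝ {p, q} : Set (Fin 3 → ℝ)) ∩ deSitter) = Set.univ := by
    refine Set.eq_univ_of_forall fun s => ?_
    obtain ⟨b, hb⟩ : ∃ b, b = s / φ q := ⟨_, rfl⟩
    refine ⟨(Real.sqrt (1 + (B p q ^ 2 - 1) * b ^ 2) - B p q * b) • p + b • q,
      ⟨Submodule.mem_span_pair.2 ⟨_, _, rfl⟩, ?_⟩, ?_⟩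
    · change B _ _ = 1
      rw [B_comb p q hp hq, sub_add_cancel, Real.sq_sqrt]
      · ring
      · have := mul_nonneg (sub_nonneg.2 hc2) (sq_nonneg b)
        linarith
    · simp only [map_add, map_smul, hφp0, smul_eq_mul, mul_zero, zero_add]
      rw [hb, div_mul_cancel₀ _ hφq]
  have := hK.image hφ
  rw [himg] at this
  exact noncompact_univ ℝ this

theorem stmt5 (p q : Fin 3 → ℝ) (hp : p ∈ deSitter) (hq : q ∈ deSitter)
    (hind : LinearIndependent ℝ ![p, q])
    (W : Submodule ℝ (Fin 3 → ℝ)) (hW : W = Submodule.span ℝ {p, q}) :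
    (IsCompact ((W : Set (Fin 3 → ℝ)) ∩ deSitter) ∧
        IsConnected ((W : Set (Fin 3 → ℝ)) ∩ deSitter)) ↔ |B p q| < 1 := by
  subst hW
  constructor
  · rintro ⟨hK, -⟩
    by_contra hc
    exact not_isCompact_section p q hp hq hind (not_lt.1 hc) hK
  · intro hc
    have hpos : 0 < 1 - B p q ^ 2 := sub_pos.2 ((sq_lt_one_iff_abs_lt_one _).2 hc)
    rw [section_eq_image p q hp hq _ (Real.sqrt_pos.2 hpos) (Real.sq_sqrt hpos.le)]
    have hcont : Continuous (fun θ : ℝ =>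
        (Real.cos θ - B p q * (Real.sin θ / Real.sqrt (1 - B p q ^ 2))) • p +
          (Real.sin θ / Real.sqrt (1 - B p q ^ 2)) • q) := by
      fun_prop
    exact ⟨isCompact_Icc.image hcont,
      (isConnected_Icc (by linarith [Real.pi_pos])).image _ hcont.continuousOn⟩
end
end

section
/- (Girard's theorem for contractible spatiolateral de Sitter triangles.) Let p₁, p₂, p₃ ∈ S₁² be linearly independent with |B(pⱼ,p_k)| < 1 for all j ≠ k (all edges spacelike), and let Vⱼᵏ = (p_k − B(pⱼ,p_k)pⱼ)/√(1 − B(pⱼ,p_k)²) be the unit spacelike tangent vector at vertex pⱼ pointing toward p_k. Assume the triangle is contractible, i.e., B(V₁², V₁³) < −1, B(V₂¹, V₂³) > 1, and B(V₃¹, V₃²) > 1. Then with interior angles θ₂₃ = arcosh(−B(V₁²,V₁³)), θ₁₃ = arcosh(B(V₂¹,V₂³)), θ₁₂ = arcosh(B(V₃¹,V₃²)), the quantity −θ₂₃ + θ₁₃ + θ₁₂ (which is the area of the triangle) is strictly positive: −arcosh(−B(V₁²,V₁³)) + arcosh(B(V₂¹,V₂³)) + arcosh(B(V₃¹,V₃²))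 > 0. -/
/-!
Write `a = B p₂ p₃`, `b = B p₁ p₃`, `c = B p₁ p₂` and let `D = a² + b² + c² - 2abc - 1` be minus the
Gram determinant of the vertices. The hyperbolic cosines of the three angles `θ₂₃`, `θ₁₃`, `θ₁₂` are
`(bc - a) / (s_b s_c)`, `(b - ac) / (s_a s_c)`, `(c - ab) / (s_a s_b)`, where `s_x = √(1 - x²)`
(`B_Vspace`), and the hyperbolic sines are `√D` over the same denominators (`sq_sub_one_eq`).
The addition formula then gives
`cosh (θ₁₃ + θ₁₂) - cosh θ₂₃ = (1 - a) D / (s_a² s_b s_c)`,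
which is positive (`cosh_lt_cosh_add`): `a < 1` since the edge `p₂p₃` is spacelike, and `D > 0` since
`cosh θ₁₃ > 1`. As `arcosh` is increasing, `θ₂₃ < θ₁₃ + θ₁₂`.
-/

noncomputable section

/-- The real inverse hyperbolic cosine. -/
def arcosh (x : ℝ) : ℝ := Real.log (x + Real.sqrt (x ^ 2 - 1))

/-- Unit tangent vector at the point `p` of the de Sitter plane pointing toward `q`,
for a spacelike edge (`|B p q| < 1`). -/
def Vspace (p q : Fin 3 → ℝ) : Fin 3 → ℝ :=
  (Real.sqrt (1 - (B p q) ^ 2))⁻¹ • (q - B p q • p)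

theorem B_comm (u v : Fin 3 → ℝ) : B u v = B v u := by
  simp only [B]; ring

/-- The spherical-type law of cosines: the product of the unit tangent vectors at `p` in terms of
the products of the vertices. -/
theorem B_Vspace {p : Fin 3 → ℝ} (hp : p ∈ deSitter) (q r : Fin 3 → ℝ) :
    B (Vspace p q) (Vspace p r) =
      (B q r - B p q * B p r) / (√(1 - B p q ^ 2) * √(1 - B p r ^ 2)) := by
  have hp' : B p p = 1 := hp
  have bilin (s t x y : ℝ) : B (s • (q - x • p)) (t • (r - y • p)) =
      s * t * (B q r - x * B p r - y * B p q + x * y * B p p) := by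
    simp only [B, Pi.smul_apply, Pi.sub_apply, smul_eq_mul]; ring
  rw [Vspace, Vspace, bilin, hp', div_eq_mul_inv, mul_inv]
  ring

/-- The square of the hyperbolic sine of an angle, in terms of the Gram determinant of the
vertices. Here `x, y` are the products along the edges at the vertex and `z` the one along the
opposite edge. -/
theorem sq_sub_one_eq {x y s t : ℝ} (z : ℝ) (hs : 0 < s) (ht : 0 < t) (hs2 : s ^ 2 = 1 - x ^ 2)
    (ht2 : t ^ 2 = 1 - y ^ 2) :
    ((z - x * y) / (s * t)) ^ 2 - 1 =
      (x ^ 2 + y ^ 2 + z ^ 2 - 2 * x * y * z - 1) / (s * t) ^ 2 := by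
  have : (s * t) ^ 2 = (1 - x ^ 2) * (1 - y ^ 2) := by rw [mul_pow, hs2, ht2]
  rw [div_pow, div_sub_one (by positivity)]
  congr 1
  rw [this]; ring

/-- The inequality `cosh θ₂₃ < cosh (θ₁₃ + θ₁₂)`, with `r, s, t` standing for `s_a, s_b, s_c`. The last
summand on the right is the product of the hyperbolic sines. -/
theorem cosh_lt_cosh_add {a b c r s t : ℝ} (hr : 0 < r) (hs : 0 < s) (ht : 0 < t)
    (hr2 : r ^ 2 = 1 - a ^ 2) (ha : a < 1)
    (hD : 0 < a ^ 2 + b ^ 2 + c ^ 2 - 2 * a * b * c - 1) :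
    -((a - c * b) / (t * s)) < (b - c * a) / (t * r) * ((c - b * a) / (s * r)) +
      (a ^ 2 + b ^ 2 + c ^ 2 - 2 * a * b * c - 1) / (t * r * (s * r)) := by
  have key : (b - c * a) / (t * r) * ((c - b * a) / (s * r)) +
      (a ^ 2 + b ^ 2 + c ^ 2 - 2 * a * b * c - 1) / (t * r * (s * r)) + (a - c * b) / (t * s) =
      (1 - a) * (a ^ 2 + b ^ 2 + c ^ 2 - 2 * a * b * c - 1) / (t * r * (s * r)) := by
    field_simp
    rw [hr2]; ring
  have : 0 < (1 - a) * (a ^ 2 + b ^ 2 + c ^ 2 - 2 * a * b * c - 1) / (t * r * (s * r)) := by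
    have := sub_pos.2 ha
    positivity
  linarith

theorem stmt13 (p₁ p₂ p₃ : Fin 3 → ℝ)
    (hp₁ : p₁ ∈ deSitter) (hp₂ : p₂ ∈ deSitter) (hp₃ : p₃ ∈ deSitter)
    (hind : LinearIndependent ℝ ![p₁, p₂, p₃])
    (h12 : |B p₁ p₂| < 1) (h13 : |B p₁ p₃| < 1) (h23 : |B p₂ p₃| < 1)
    (hc1 : B (Vspace p₁ p₂) (Vspace p₁ p₃) < -1)
    (hc2 : 1 < B (Vspace p₂ p₁) (Vspace p₂ p₃))
    (hc3 : 1 < B (Vspace p₃ p₁) (Vspace p₃ p₂)) :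
    0 < -arcosh (-(B (Vspace p₁ p₂) (Vspace p₁ p₃)))
        + arcosh (B (Vspace p₂ p₁) (Vspace p₂ p₃))
        + arcosh (B (Vspace p₃ p₁) (Vspace p₃ p₂)) := by
  have pos {x : ℝ} (hx : |x| < 1) : 0 < 1 - x ^ 2 := by
    have := (sq_lt_one_iff_abs_lt_one x).2 hx
    linarith
  rw [B_Vspace hp₁] at hc1 ⊢
  rw [B_Vspace hp₂, B_comm p₂ p₁] at hc2 ⊢
  rw [B_Vspace hp₃, B_comm p₃ p₁, B_comm p₃ p₂] at hc3 ⊢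
  have ha1 := (abs_lt.1 h23).2
  set a := B p₂ p₃
  set b := B p₁ p₃
  set c := B p₁ p₂
  have hr := Real.sqrt_pos.2 (pos h23)
  have hs := Real.sqrt_pos.2 (pos h13)
  have ht := Real.sqrt_pos.2 (pos h12)
  have hr2 := Real.sq_sqrt (pos h23).le
  have hs2 := Real.sq_sqrt (pos h13).le
  have ht2 := Real.sq_sqrt (pos h12).le
  set r := √(1 - a ^ 2)
  set s := √(1 - b ^ 2)
  set t := √(1 - c ^ 2)
  set D := a ^ 2 + b ^ 2 + c ^ 2 - 2 * a * b * c - 1 with hDdef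
  have hY : ((b - c * a) / (t * r)) ^ 2 - 1 = D / (t * r) ^ 2 := by
    rw [sq_sub_one_eq b ht hr ht2 hr2, hDdef]; ring
  have hZ : ((c - b * a) / (s * r)) ^ 2 - 1 = D / (s * r) ^ 2 := by
    rw [sq_sub_one_eq c hs hr hs2 hr2, hDdef]; ring
  have hD : 0 < D := by
    have h : 0 < D / (t * r) ^ 2 := by rw [← hY]; nlinarith
    exact (div_pos_iff_of_pos_right (by positivity)).1 h
  have hlt := cosh_lt_cosh_add (b := b) (c := c) hr hs ht hr2 ha1 hD
  rw [← hDdef] at hlt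
  set Y := (b - c * a) / (t * r)
  set Z := (c - b * a) / (s * r)
  have hcosh : Real.cosh (Real.arcosh Y + Real.arcosh Z) = Y * Z + D / (t * r * (s * r)) := by
    rw [Real.cosh_add, Real.cosh_arcosh hc2.le, Real.cosh_arcosh hc3.le, Real.sinh_arcosh hc2.le,
      Real.sinh_arcosh hc3.le, hY, hZ, Real.sqrt_div hD.le, Real.sqrt_div hD.le,
      Real.sqrt_sq (by positivity), Real.sqrt_sq (by positivity), div_mul_div_comm √D,
      Real.mul_self_sqrt hD.le]
  rw [← hcosh] at hlt
  have hfin := (Real.arcosh_lt_arcosh (by linarith) (Real.cosh_pos _)).2 hlt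
  rw [Real.arcosh_cosh (add_nonneg (Real.arcosh_nonneg hc2.le) (Real.arcosh_nonneg hc3.le))] at hfin
  -- The root-level `arcosh` and `Real.arcosh` are definitionally equal.
  change 0 < -Real.arcosh _ + Real.arcosh Y + Real.arcosh Z
  linarith
end
end

section
/- Let p₁, p₂, p₃ ∈ S₁² be linearly independent vertices of a chronosceles de Sitter triangle: B(p₁,p₂) > 1, B(p₁,p₃) > 1 (the two edges through p₁ are timelike), and |B(p₂,p₃)| < 1 (the edge opposite p₁ is spacelike). Let V₁² = (p₂ − B(p₁,p₂)p₁)/√(B(p₁,p₂)² − 1) and V₁³ = (p₃ − B(p₁,p₃)p₁)/√(B(p₁,p₃)² − 1) be the unit timelike tangent vectors at p₁ toward p₂ and p₃. Then B(V₁², V₁³) < −1 (equivalently, the unit outer normals to the two edge planes through p₁ are spacelike vectors u₂, u₃ with B(u₂,u₃) < −1). -/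
/-!
Write `a = B p₁ p₂`, `b = B p₁ p₃`, `c = B p₂ p₃`. Since `B p₁ p₁ = 1`, bilinearity gives
`B V₁² V₁³ = (c - a b) / (√(a² - 1) √(b² - 1))`, so the claim is
`√(a² - 1) √(b² - 1) < a b - c`. The right side is positive because `c < 1 < a b`, and the
squares compare by the identity
`(a b - c)² - (a² - 1)(b² - 1) = (a - b c)² + (b² - 1)(1 - c²)`,
whose last term is positive because `1 < b` and `|c| < 1`. The left side of the
identity is minus the Gram determinant of the three vertices.
-/

noncomputable section

/-- Unit tangent vector at the point `p` of the de Sitter plane pointing toward `q`,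
for a timelike edge (`B p q > 1`). -/
def Vtime (p q : Fin 3 → ℝ) : Fin 3 → ℝ :=
  (Real.sqrt ((B p q) ^ 2 - 1))⁻¹ • (q - B p q • p)

/-- The components of `q` and `r` orthogonal to the unit spacelike vector `p` pair as
`B q r - B p q * B p r`. -/
lemma B_Vtime (p q r : Fin 3 → ℝ) (hp : p ∈ deSitter) :
    B (Vtime p q) (Vtime p r) =
      (√(B p q ^ 2 - 1))⁻¹ * (√(B p r ^ 2 - 1))⁻¹ * (B q r - B p q * B p r) := by
  have hp' : B p p = 1 := hp
  have expand : ∀ s t a b : ℝ, B (s • (q - a • p)) (t • (r - b • p)) =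
      s * t * (B q r - b * B p q - a * B p r + a * b * B p p) := by
    intro s t a b
    simp only [B, Pi.smul_apply, Pi.sub_apply, smul_eq_mul]
    ring
  rw [Vtime, Vtime, expand, hp']
  ring

theorem stmt16 (p₁ p₂ p₃ : Fin 3 → ℝ)
    (hp₁ : p₁ ∈ deSitter) (hp₂ : p₂ ∈ deSitter) (hp₃ : p₃ ∈ deSitter)
    (hind : LinearIndependent ℝ ![p₁, p₂, p₃])
    (h12 : 1 < B p₁ p₂) (h13 : 1 < B p₁ p₃) (h23 : |B p₂ p₃| < 1) :
    B (Vtime p₁ p₂) (Vtime p₁ p₃) < -1 := by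
  rw [B_Vtime p₁ p₂ p₃ hp₁]
  generalize B p₁ p₂ = a at *
  generalize B p₁ p₃ = b at *
  generalize B p₂ p₃ = c at *
  obtain ⟨hc₁, hc₂⟩ := abs_lt.mp h23
  have ha : 0 < a ^ 2 - 1 := by nlinarith
  have hb : 0 < b ^ 2 - 1 := by nlinarith
  have hc : 0 < 1 - c ^ 2 := by nlinarith
  have hab : 0 < a * b - c := by nlinarith
  have key : √(a ^ 2 - 1) * √(b ^ 2 - 1) < a * b - c := by
    rw [← Real.sqrt_mul ha.le, Real.sqrt_lt' hab]
    nlinarith [sq_nonneg (a - b * c), mul_pos hb hc]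
  have hs : 0 < √(a ^ 2 - 1) * √(b ^ 2 - 1) :=
    mul_pos (Real.sqrt_pos.mpr ha) (Real.sqrt_pos.mpr hb)
  rw [← mul_inv, inv_mul_eq_div, div_lt_iff₀ hs]
  linarith
end
end
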